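/- arXiv:0902.3860 — 2 statements merged into one kernel-verified Lean document; each statement's English description precedes it below -/
import Mathlib

section
/- Let Γ be a Shilla distance-regular graph with b = b(Γ) ≥ 2 such that the multiplicities of the two smallest eigenvalues are equal (m₂ = m₃). Then a₃ - b < b₂ + c₂ < a₃ + b. -/
open Finset SimpleGraph

/-- `G` is a distance-regular graph with diameter `D` and intersection numbers
`b i`, `c i`, `a i` (so valency `k = b 0` and `a i = k - b i - c i`). -/
structure IsDRG {V : Type*} [Fintype V] (G : SimpleGraph V) (D : ℕ)
    (b c a : ℕ → ℕ) : Prop where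
  connected : G.Connected
  le_diam : ∀ x y : V, G.dist x y ≤ D
  exists_diam : ∃ x y : V, G.dist x y = D
  card_b : ∀ i, i ≤ D → ∀ x y : V, G.dist x y = i →
      Nat.card {z : V | G.Adj y z ∧ G.dist x z = i + 1} = b i
  card_c : ∀ i, i ≤ D → ∀ x y : V, G.dist x y = i →
      Nat.card {z : V | G.Adj y z ∧ G.dist x z = i - 1} = c i
  card_a : ∀ i, i ≤ D → ∀ x y : V, G.dist x y = i →
      Nat.card {z : V | G.Adj y z ∧ G.dist x z = i} = a i

/-- `θ` is an eigenvalue of the adjacency matrix of `G`. -/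
def IsEig {V : Type*} [Fintype V] [DecidableEq V] (G : SimpleGraph V)
    [DecidableRel G.Adj] (θ : ℝ) : Prop :=
  ∃ v : V → ℝ, v ≠ 0 ∧ (G.adjMatrix ℝ).mulVec v = θ • v

/-- `θ` is the second largest eigenvalue of `G` (`k` being the largest). -/
def IsSecondLargestEig {V : Type*} [Fintype V] [DecidableEq V] (G : SimpleGraph V)
    [DecidableRel G.Adj] (k θ : ℝ) : Prop :=
  IsEig G θ ∧ θ < k ∧ ∀ η : ℝ, IsEig G η → η ≠ k → η ≤ θ

/-- `θ` is the smallest eigenvalue of `G`. -/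
def IsSmallestEig {V : Type*} [Fintype V] [DecidableEq V] (G : SimpleGraph V)
    [DecidableRel G.Adj] (θ : ℝ) : Prop :=
  IsEig G θ ∧ ∀ η : ℝ, IsEig G η → θ ≤ η

/-- The multiplicity of `θ` as an eigenvalue of the adjacency matrix of `G`. -/
noncomputable def eigMult {V : Type*} [Fintype V] [DecidableEq V] (G : SimpleGraph V)
    [DecidableRel G.Adj] (θ : ℝ) : ℕ :=
  Module.finrank ℝ ↥(Module.End.eigenspace (Matrix.toLin' (G.adjMatrix ℝ)) θ)

/-- A Shilla distance-regular graph: diameter `3` and second largest eigenvalue `a 3`. -/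
structure IsShilla {V : Type*} [Fintype V] [DecidableEq V] (G : SimpleGraph V)
    [DecidableRel G.Adj] (b c a : ℕ → ℕ) : Prop where
  drg : IsDRG G 3 b c a
  second : IsSecondLargestEig G (b 0) ((a 3 : ℝ))

/-!
Summing an eigenvector over the spheres around a vertex turns the eigenvalue equation into a
three-term recurrence in the intersection numbers, so every eigenvalue is a root of an explicit
polynomial of degree `D + 1`. For a Shilla graph the root `a₃` gives `k = b a₃`; dividing out the
roots `k` and `a₃` leaves a quadratic for the two remaining eigenvalues.

If these have a common multiplicity `m`, the traces of `1`, `A` and `A²` determine `m` in two ways,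
and equating them gives the polynomial identity for `m₂ = m₃`. With `t = b₂ + c₂`, this identity
presents each of `b - (t - a₃)` and `(t - a₃) + b`, multiplied by a nonnegative factor, as a sum of
terms that are nonnegative and not all zero.
-/

theorem abs_add_sub_lt_of_equal_mult_identity {R : Type*} [CommRing R] [LinearOrder R]
    [IsStrictOrderedRing R] {a β B c : R} (ha : 0 ≤ a) (hβ : 1 < β) (hB : 0 ≤ B) (hc : 0 < c)
    (h : (B + c) * (B + c - a) * (B + c + (β - 1) * a) - β * B ^ 2 + (2 * β - 3) * c ^ 2
      + β * (β - 1) * c + (β - 1) ^ 2 * a * c - β * (β - 1) * a * B + (β - 3) * B * c = 0) :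
    |B + c - a| < β := by
  have hβ₂ : 0 < 2 * β - 1 := by linarith
  have hupper : (β - (B + c - a)) * ((B + c) * (B + c + (β - 1) * a)) =
      (β - 1) * c * (3 * (B + c) + β + (2 * β - 1) * a) := by
    linear_combination -h
  have hlower : (B + c - a + β) * ((B + c) * (B + c + (β - 1) * a) + (β - 1) * c) =
      2 * (β * B ^ 2 + (β + 1) * B * c + c ^ 2 + β * (β - 1) * a * B) := by
    linear_combination h
  refine abs_lt.mpr ⟨neg_lt_iff_pos_add.mpr ?_, sub_pos.mp ?_⟩
  · exact pos_of_mul_pos_left (b := (B + c) * (B + c + (β - 1) * a) + (β - 1) * c)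
      (by rw [hlower]; positivity) (by positivity)
  · exact pos_of_mul_pos_left (b := (B + c) * (B + c + (β - 1) * a))
      (by rw [hupper]; positivity) (by positivity)

section Spectrum

open Module.End

theorem trace_pow_eq_sum_finrank_eigenspace {K M : Type*} [Field K] [AddCommGroup M] [Module K M]
    [FiniteDimensional K M] {f : Module.End K M} (hf : ⨆ μ, eigenspace f μ = ⊤) {s : Finset K}
    (hs : ∀ μ, f.HasEigenvalue μ → μ ∈ s) (p : ℕ) :
    LinearMap.trace K M (f ^ p) = ∑ μ ∈ s, Module.finrank K (eigenspace f μ) * μ ^ p := by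
  classical
  have hinternal := DirectSum.isInternal_submodule_of_iSupIndep_of_iSup_eq_top
    f.eigenspaces_iSupIndep hf
  have hfinite : {μ | eigenspace f μ ≠ ⊥}.Finite := s.finite_toSet.subset hs
  have hpow (μ : K) (w : M) (hw : w ∈ eigenspace f μ) : (f ^ p) w = μ ^ p • w := by
    clear hinternal
    induction p with
    | zero => simp
    | succ p ih =>
      rw [pow_succ, mul_apply, mem_eigenspace_iff.mp hw, map_smul, ih, smul_smul, pow_succ']
  have hmaps (μ : K) : Set.MapsTo (f ^ p) (eigenspace f μ) (eigenspace f μ) := fun w hw ↦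
    hpow μ w hw ▸ Submodule.smul_mem _ _ hw
  rw [LinearMap.trace_eq_sum_trace_restrict' hinternal hfinite hmaps]
  refine (Finset.sum_congr rfl fun μ _ ↦ ?_).trans
    (Finset.sum_subset (fun μ hμ ↦ hs μ (hfinite.mem_toFinset.mp hμ)) fun μ _ hμ ↦ ?_)
  · have hrestrict : (f ^ p).restrict (hmaps μ) = μ ^ p • LinearMap.id :=
      LinearMap.ext fun w ↦ Subtype.ext (hpow μ w w.2)
    rw [hrestrict, map_smul, LinearMap.trace_id, smul_eq_mul, mul_comm]
  · have hbot : eigenspace f μ = ⊥ := by simpa using hμ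
    rw [hbot, finrank_bot, Nat.cast_zero, zero_mul]

theorem iSup_eigenspace_toLin'_eq_top_of_isHermitian {𝕜 n : Type*} [RCLike 𝕜] [Fintype n]
    [DecidableEq n] {A : Matrix n n 𝕜} (hA : A.IsHermitian) :
    ⨆ μ, eigenspace (Matrix.toLin' A) μ = ⊤ := by
  let e : Module.Basis n 𝕜 (n → 𝕜) :=
    hA.eigenvectorBasis.toBasis.map (WithLp.linearEquiv 2 𝕜 (n → 𝕜))
  rw [eq_top_iff, ← e.span_eq, Submodule.span_le]
  rintro _ ⟨i, rfl⟩
  refine le_iSup (eigenspace (Matrix.toLin' A)) (hA.eigenvalues i : 𝕜) (mem_eigenspace_iff.mpr ?_)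
  rw [Matrix.toLin'_apply, ← RCLike.real_smul_eq_coe_smul]
  exact hA.mulVec_eigenvectorBasis i

variable {V : Type*} [Fintype V] [DecidableEq V] {G : SimpleGraph V} [DecidableRel G.Adj]

theorem isEig_of_hasEigenvalue {θ : ℝ} (h : HasEigenvalue (Matrix.toLin' (G.adjMatrix ℝ)) θ) :
    IsEig G θ := by
  obtain ⟨v, hv⟩ := h.exists_hasEigenvector
  exact ⟨v, hv.2, hv.apply_eq_smul⟩

theorem trace_adjMatrix_pow_eq_sum_eigMult {s : Finset ℝ} (hs : ∀ θ, IsEig G θ → θ ∈ s) (p : ℕ) :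
    (G.adjMatrix ℝ ^ p).trace = ∑ θ ∈ s, eigMult G θ * θ ^ p := by
  rw [← Matrix.trace_toLin'_eq, Matrix.toLin'_pow]
  exact trace_pow_eq_sum_finrank_eigenspace
    (iSup_eigenspace_toLin'_eq_top_of_isHermitian (G.isHermitian_adjMatrix ℝ))
    (fun θ hθ ↦ hs θ (isEig_of_hasEigenvalue hθ)) p

theorem eigMult_degree_eq_one (hconn : G.Connected) {k : ℕ} (hreg : G.IsRegularOfDegree k) :
    eigMult G k = 1 := by
  classical
  have hspace : eigenspace (Matrix.toLin' (G.adjMatrix ℝ)) (k : ℝ) =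
      LinearMap.ker (Matrix.toLin' (G.lapMatrix ℝ)) := by
    ext v
    simp only [mem_eigenspace_iff, LinearMap.mem_ker, Matrix.toLin'_apply, funext_iff,
      lapMatrix_mulVec_apply, adjMatrix_mulVec_apply, hreg.degree_eq, Pi.smul_apply,
      Pi.zero_apply, smul_eq_mul, sub_eq_zero]
    exact forall_congr' fun _ ↦ eq_comm
  have := hconn.preconnected.subsingleton_connectedComponent
  have : Nonempty G.ConnectedComponent := hconn.nonempty.map G.connectedComponentMk
  rw [eigMult, hspace, ← card_connectedComponent_eq_finrank_ker_toLin'_lapMatrix]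
  exact le_antisymm (Fintype.card_le_one_iff_subsingleton.mpr ‹_›) Fintype.card_pos

theorem four_eigenvalue_relation_of_eigMult_eq (hconn : G.Connected) {k : ℕ}
    (hreg : G.IsRegularOfDegree k) {θ₁ θ₂ θ₃ : ℝ} (hnodup : [(k : ℝ), θ₁, θ₂, θ₃].Nodup)
    (hall : ∀ θ, IsEig G θ → θ = k ∨ θ = θ₁ ∨ θ = θ₂ ∨ θ = θ₃)
    (hmult : eigMult G θ₂ = eigMult G θ₃) :
    (k + θ₁ * (Fintype.card V - 1)) * (θ₂ ^ 2 + θ₃ ^ 2 - 2 * θ₁ ^ 2) =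
      (2 * θ₁ - (θ₂ + θ₃)) *
        (Fintype.card V * k - k ^ 2 - θ₁ ^ 2 * (Fintype.card V - 1)) := by
  have htrace (p : ℕ) : (G.adjMatrix ℝ ^ p).trace =
      k ^ p + eigMult G θ₁ * θ₁ ^ p + eigMult G θ₂ * (θ₂ ^ p + θ₃ ^ p) := by
    rw [trace_adjMatrix_pow_eq_sum_eigMult (s := [(k : ℝ), θ₁, θ₂, θ₃].toFinset)
      (fun θ hθ ↦ by simpa using hall θ hθ), List.sum_toFinset _ hnodup]
    simp only [List.map_cons, List.map_nil, List.sum_cons, List.sum_nil,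
      eigMult_degree_eq_one hconn hreg, ← hmult]
    ring
  have h₀ : (Fintype.card V : ℝ) = 1 + eigMult G θ₁ + eigMult G θ₂ * 2 := by
    simpa [one_add_one_eq_two] using htrace 0
  have h₁ : 0 = k + eigMult G θ₁ * θ₁ + eigMult G θ₂ * (θ₂ + θ₃) := by
    simpa using htrace 1
  have h₂ : Fintype.card V * (k : ℝ) =
      k ^ 2 + eigMult G θ₁ * θ₁ ^ 2 + eigMult G θ₂ * (θ₂ ^ 2 + θ₃ ^ 2) := by
    rw [← htrace 2, sq]
    simp only [Matrix.trace, Matrix.diag_apply, adjMatrix_mul_self_apply_self, hreg.degree_eq,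
      sum_const, card_univ, nsmul_eq_mul]
  have hlinear : k + θ₁ * (Fintype.card V - 1) = eigMult G θ₂ * (2 * θ₁ - (θ₂ + θ₃)) := by
    linear_combination θ₁ * h₀ - h₁
  have hquadratic : Fintype.card V * k - k ^ 2 - θ₁ ^ 2 * (Fintype.card V - 1) =
      eigMult G θ₂ * (θ₂ ^ 2 + θ₃ ^ 2 - 2 * θ₁ ^ 2) := by
    linear_combination h₂ - θ₁ ^ 2 * h₀
  rw [hlinear, hquadratic]
  ring

end Spectrum

section Sphere

variable {V : Type*} [Fintype V] {G : SimpleGraph V}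

/-- The sum of `v` over the sphere of radius `i` around `x`, in the graph distance. -/
noncomputable def sphereSum (G : SimpleGraph V) (v : V → ℝ) (x : V) (i : ℕ) : ℝ :=
  ∑ y with G.dist x y = i, v y

theorem sphereSum_smul (θ : ℝ) (v : V → ℝ) (x : V) (i : ℕ) :
    sphereSum G (θ • v) x i = θ * sphereSum G v x i :=
  (mul_sum ..).symm

theorem sphereSum_zero (hconn : G.Connected) (v : V → ℝ) (x : V) : sphereSum G v x 0 = v x := by
  classical
  simp only [sphereSum, hconn.dist_eq_zero_iff, filter_eq, mem_univ, if_true, sum_singleton]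

theorem sphereSum_mulVec [DecidableRel G.Adj] (v : V → ℝ) (x : V) (i : ℕ) :
    sphereSum G ((G.adjMatrix ℝ).mulVec v) x i =
      ∑ z, (#{y ∈ G.neighborFinset z | G.dist x y = i} : ℝ) * v z := by
  simp only [sphereSum, adjMatrix_mulVec_apply]
  rw [Finset.sum_comm' (t' := univ) (s' := fun z ↦ {y ∈ G.neighborFinset z | G.dist x y = i})
    (by simp [adj_comm, and_comm])]
  simp only [sum_const, nsmul_eq_mul]

theorem card_neighborFinset_filter_dist [DecidableRel G.Adj] (x z : V) (i : ℕ) :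
    #{y ∈ G.neighborFinset z | G.dist x y = i} =
      Nat.card {y : V | G.Adj z y ∧ G.dist x y = i} := by
  rw [Nat.card_coe_set_eq, ← Set.ncard_coe_finset]
  congr 1
  ext y
  simp

theorem exists_adj_dist_eq {W : Type*} {H : SimpleGraph W} {x y : W} {i : ℕ}
    (h : H.dist x y = i + 1) : ∃ z, H.Adj y z ∧ H.dist x z = i := by
  obtain ⟨p, hp⟩ := exists_walk_of_dist_ne_zero (G := H) (u := y) (v := x) (by simp [dist_comm, h])
  rw [dist_comm, h] at hp
  cases p with
  | nil => simp at hp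
  | @cons _ z _ hyz q =>
    have hq : H.dist x z ≤ q.length := dist_comm (G := H) ▸ dist_le q
    have := hyz.diff_dist_adj (u := x)
    rw [Walk.length_cons] at hp
    exact ⟨z, hyz, by omega⟩

theorem exists_dist_eq_of_le {W : Type*} {H : SimpleGraph W} {x y : W} {i : ℕ}
    (hi : i ≤ H.dist x y) : ∃ z, H.dist x z = i := by
  induction hi using Nat.decreasingInduction with
  | self => exact ⟨y, rfl⟩
  | of_succ j _ ih =>
    obtain ⟨z, hz⟩ := ih
    obtain ⟨w, -, hw⟩ := exists_adj_dist_eq hz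
    exact ⟨w, hw⟩

end Sphere

open Polynomial in
/-- The monic polynomials `Fᵢ` for which `Fᵢ(A)` is `c₁ ⋯ cᵢ` times the `i`-th distance matrix
of a distance-regular graph with intersection numbers `b`, `c`, `a`. -/
noncomputable def distancePoly (b c a : ℕ → ℕ) : ℕ → ℝ[X]
  | 0 => 1
  | 1 => X
  | i + 2 => (X - C (a (i + 1) : ℝ)) * distancePoly b c a (i + 1)
      - C (b i * c (i + 1) : ℝ) * distancePoly b c a i

namespace IsDRG

open Polynomial

variable {V : Type*} [Fintype V] {G : SimpleGraph V} {D : ℕ} {b c a : ℕ → ℕ}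

theorem exists_dist_eq (h : IsDRG G D b c a) {i : ℕ} (hi : i ≤ D) : ∃ x y, G.dist x y = i := by
  obtain ⟨x, y, rfl⟩ := h.exists_diam
  exact ⟨x, exists_dist_eq_of_le hi⟩

theorem card_eq_sum_card_sphere (h : IsDRG G D b c a) (x : V) :
    Fintype.card V = ∑ i ∈ range (D + 1), #{y | G.dist x y = i} :=
  Finset.card_eq_sum_card_fiberwise fun y _ ↦ by simpa [Nat.lt_succ_iff] using h.le_diam x y

section Neighbors

variable [DecidableRel G.Adj]

theorem card_neighbors_farther (h : IsDRG G D b c a) {x z : V} {i : ℕ} (hz : G.dist x z = i) :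
    #{y ∈ G.neighborFinset z | G.dist x y = i + 1} = b i :=
  (card_neighborFinset_filter_dist x z _).trans (h.card_b i (hz ▸ h.le_diam x z) x z hz)

theorem card_neighbors_same (h : IsDRG G D b c a) {x z : V} {i : ℕ} (hz : G.dist x z = i) :
    #{y ∈ G.neighborFinset z | G.dist x y = i} = a i :=
  (card_neighborFinset_filter_dist x z _).trans (h.card_a i (hz ▸ h.le_diam x z) x z hz)

theorem card_neighbors_closer (h : IsDRG G D b c a) {x z : V} {i : ℕ} (hz : G.dist x z = i + 1) :
    #{y ∈ G.neighborFinset z | G.dist x y = i} = c (i + 1) :=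
  (card_neighborFinset_filter_dist x z _).trans (h.card_c _ (hz ▸ h.le_diam x z) x z hz)

theorem card_neighbors_dist_zero (h : IsDRG G D b c a) (x z : V) :
    #{y ∈ G.neighborFinset z | G.dist x y = 0} = if G.dist x z = 1 then c 1 else 0 := by
  split_ifs with hz
  · exact h.card_neighbors_closer hz
  · rw [Finset.card_eq_zero, Finset.filter_eq_empty_iff]
    intro y hy hxy
    rw [h.connected.dist_eq_zero_iff] at hxy
    exact hz (dist_eq_one_iff_adj.mpr (hxy ▸ ((mem_neighborFinset ..).mp hy).symm))

theorem card_neighbors_dist_succ (h : IsDRG G D b c a) (x z : V) (i : ℕ) :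
    #{y ∈ G.neighborFinset z | G.dist x y = i + 1} =
      (if G.dist x z = i then b i else 0) + (if G.dist x z = i + 1 then a (i + 1) else 0) +
        (if G.dist x z = i + 2 then c (i + 2) else 0) := by
  by_cases hb : G.dist x z = i
  · simpa [hb] using h.card_neighbors_farther hb
  by_cases ha : G.dist x z = i + 1
  · simpa [ha] using h.card_neighbors_same ha
  by_cases hc : G.dist x z = i + 2
  · simpa [hc] using h.card_neighbors_closer hc
  rw [if_neg hb, if_neg ha, if_neg hc, Finset.card_eq_zero, Finset.filter_eq_empty_iff]
  intro y hy hxy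
  have := ((mem_neighborFinset ..).mp hy).diff_dist_adj (u := x)
  omega

theorem isRegularOfDegree (h : IsDRG G D b c a) : G.IsRegularOfDegree (b 0) := by
  intro x
  rw [← h.card_neighbors_farther (dist_self (v := x)), ← card_neighborFinset_eq_degree,
    Finset.filter_true_of_mem fun y hy ↦ dist_eq_one_iff_adj.mpr ((mem_neighborFinset ..).mp hy)]

end Neighbors

theorem b_pos (h : IsDRG G D b c a) {i : ℕ} (hi : i < D) : 0 < b i := by
  classical
  obtain ⟨x, y, hy⟩ := h.exists_dist_eq hi
  obtain ⟨z, hyz, hz⟩ := exists_adj_dist_eq hy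
  rw [← h.card_neighbors_farther hz, Finset.card_pos]
  exact ⟨y, by simp [hyz.symm, hy]⟩

theorem c_pos (h : IsDRG G D b c a) {i : ℕ} (hi : i < D) : 0 < c (i + 1) := by
  classical
  obtain ⟨x, y, hy⟩ := h.exists_dist_eq hi
  obtain ⟨z, hyz, hz⟩ := exists_adj_dist_eq hy
  rw [← h.card_neighbors_closer hy, Finset.card_pos]
  exact ⟨z, by simp [hyz, hz]⟩

theorem c_one (h : IsDRG G D b c a) (hD : 0 < D) : c 1 = 1 := by
  classical
  obtain ⟨x, y, hy⟩ := h.exists_dist_eq hD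
  have hyx : G.Adj y x := (dist_eq_one_iff_adj.mp hy).symm
  rw [← h.card_neighbors_closer hy, Finset.card_eq_one]
  refine ⟨x, Finset.ext fun z ↦ ?_⟩
  simp only [mem_filter, mem_neighborFinset, h.connected.dist_eq_zero_iff, mem_singleton]
  exact ⟨fun hz ↦ hz.2.symm, fun hz ↦ ⟨hz ▸ hyx, hz.symm⟩⟩

theorem b_diam (h : IsDRG G D b c a) : b D = 0 := by
  classical
  obtain ⟨x, y, hy⟩ := h.exists_dist_eq le_rfl
  rw [← h.card_neighbors_farther hy, Finset.card_eq_zero, Finset.filter_eq_empty_iff]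
  exact fun z _ hz ↦ absurd (h.le_diam x z) (by omega)

theorem valency_eq_add (h : IsDRG G D b c a) {i : ℕ} (hi : i < D) :
    b 0 = c (i + 1) + a (i + 1) + b (i + 1) := by
  classical
  obtain ⟨x, y, hy⟩ := h.exists_dist_eq hi
  rw [← h.isRegularOfDegree.degree_eq y, ← card_neighborFinset_eq_degree,
    ← h.card_neighbors_closer hy, ← h.card_neighbors_same hy, ← h.card_neighbors_farther hy,
    card_eq_sum_ones, card_filter, card_filter, card_filter, ← sum_add_distrib, ← sum_add_distrib]
  refine Finset.sum_congr rfl fun z hz ↦ ?_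
  have := ((mem_neighborFinset ..).mp hz).diff_dist_adj (u := x)
  split_ifs <;> omega

theorem c_mul_card_sphere_succ (h : IsDRG G D b c a) (x : V) (i : ℕ) :
    c (i + 1) * #{y | G.dist x y = i + 1} = b i * #{y | G.dist x y = i} := by
  classical
  rw [mul_comm, mul_comm (b i)]
  refine Finset.card_mul_eq_card_mul G.Adj (fun y hy ↦ ?_) fun z hz ↦ ?_
  · rw [← h.card_neighbors_closer (mem_filter.mp hy).2]
    congr 1
    ext
    simp [bipartiteAbove, and_comm]
  · rw [← h.card_neighbors_farther (mem_filter.mp hz).2]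
    congr 1
    ext
    simp [bipartiteBelow, and_comm, adj_comm]

variable [DecidableRel G.Adj]

theorem sphereSum_mulVec_zero (h : IsDRG G D b c a) (v : V → ℝ) (x : V) :
    sphereSum G ((G.adjMatrix ℝ).mulVec v) x 0 = c 1 * sphereSum G v x 1 := by
  rw [sphereSum_mulVec]
  simp only [h.card_neighbors_dist_zero, Nat.cast_ite, Nat.cast_zero, ite_mul, zero_mul,
    ← sum_filter, sphereSum, mul_sum]

theorem sphereSum_mulVec_succ (h : IsDRG G D b c a) (v : V → ℝ) (x : V) (i : ℕ) :
    sphereSum G ((G.adjMatrix ℝ).mulVec v) x (i + 1) =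
      b i * sphereSum G v x i + a (i + 1) * sphereSum G v x (i + 1) +
        c (i + 2) * sphereSum G v x (i + 2) := by
  rw [sphereSum_mulVec]
  simp only [h.card_neighbors_dist_succ, Nat.cast_add, Nat.cast_ite, Nat.cast_zero, add_mul,
    ite_mul, zero_mul, sum_add_distrib, ← sum_filter, sphereSum, mul_sum]

theorem prod_c_mul_sphereSum (h : IsDRG G D b c a) {v : V → ℝ} {θ : ℝ}
    (hv : (G.adjMatrix ℝ).mulVec v = θ • v) (x : V) (i : ℕ) :
    (∏ j ∈ range i, (c (j + 1) : ℝ)) * sphereSum G v x i =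
      (distancePoly b c a i).eval θ * v x := by
  induction i using Nat.twoStepInduction with
  | zero => simp [distancePoly, sphereSum_zero h.connected]
  | one =>
    rw [prod_range_one, ← h.sphereSum_mulVec_zero, hv, sphereSum_smul, sphereSum_zero h.connected,
      distancePoly, eval_X]
  | more i ih₀ ih₁ =>
    have hrec := h.sphereSum_mulVec_succ v x i
    rw [hv, sphereSum_smul] at hrec
    rw [prod_range_succ] at ih₁
    simp only [distancePoly, prod_range_succ, eval_sub, eval_mul, eval_X, eval_C]
    linear_combination (θ - a (i + 1)) * ih₁ - (b i * c (i + 1) : ℝ) * ih₀ -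
      (∏ j ∈ range i, (c (j + 1) : ℝ)) * c (i + 1) * hrec

theorem eval_distancePoly_eq_zero [DecidableEq V] (h : IsDRG G D b c a) {θ : ℝ}
    (hθ : IsEig G θ) : (distancePoly b c a (D + 1)).eval θ = 0 := by
  obtain ⟨v, hv₀, hv⟩ := hθ
  obtain ⟨x, hx⟩ := Function.ne_iff.mp hv₀
  have hsphere : sphereSum G v x (D + 1) = 0 :=
    Finset.sum_eq_zero fun y hy ↦
      absurd (h.le_diam x y) (by rw [(mem_filter.mp hy).2]; exact Nat.not_succ_le_self D)
  have hprod := h.prod_c_mul_sphereSum hv x (D + 1)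
  rw [hsphere, mul_zero] at hprod
  exact (mul_eq_zero.mp hprod.symm).resolve_right hx

end IsDRG

namespace IsShilla

open Polynomial

variable {V : Type*} [Fintype V] [DecidableEq V] {G : SimpleGraph V} [DecidableRel G.Adj]
  {b c a : ℕ → ℕ} {β : ℕ}

theorem valency_eq (h : IsShilla G b c a) (hβ : a 3 = a 1 + β) : (b 0 : ℝ) = a 3 * β := by
  have hroot := h.drg.eval_distancePoly_eq_zero h.second.1
  have ha₁ : (a 1 : ℝ) = a 3 - β := by rw [hβ, Nat.cast_add, add_sub_cancel_right]
  have hne : (b 2 * c 3 : ℝ) ≠ 0 :=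
    mod_cast (Nat.mul_pos (h.drg.b_pos (by norm_num)) (h.drg.c_pos (by norm_num))).ne'
  simp only [distancePoly, eval_sub, eval_mul, eval_X, eval_C, eval_one,
    h.drg.c_one (by norm_num), ha₁] at hroot
  refine mul_left_cancel₀ hne ?_
  linear_combination hroot

theorem a_three_pos (h : IsShilla G b c a) (hβ : a 3 = a 1 + β) : (0 : ℝ) < a 3 := by
  have hlt := h.second.2.1
  rw [h.valency_eq hβ] at hlt
  exact (Nat.cast_nonneg _).lt_of_ne fun h₀ ↦ by simp [← h₀] at hlt

theorem one_lt (h : IsShilla G b c a) (hβ : a 3 = a 1 + β) : (1 : ℝ) < β :=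
  (lt_mul_iff_one_lt_right (h.a_three_pos hβ)).mp (h.valency_eq hβ ▸ h.second.2.1)

theorem b_one_eq (h : IsShilla G b c a) (hβ : a 3 = a 1 + β) :
    (b 1 : ℝ) = (β - 1) * (a 3 + 1) := by
  have hsum : (b 0 : ℝ) = c 1 + a 1 + b 1 := mod_cast h.drg.valency_eq_add (i := 0) (by norm_num)
  rw [h.drg.c_one (by norm_num), Nat.cast_one] at hsum
  have ha₃ : (a 3 : ℝ) = a 1 + β := mod_cast hβ
  linear_combination h.valency_eq hβ - hsum + ha₃

theorem a_two_eq (h : IsShilla G b c a) (hβ : a 3 = a 1 + β) :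
    (a 2 : ℝ) = a 3 * β - c 2 - b 2 := by
  have hsum : (b 0 : ℝ) = c 2 + a 2 + b 2 := mod_cast h.drg.valency_eq_add (i := 1) (by norm_num)
  linear_combination h.valency_eq hβ - hsum

theorem c_three_eq (h : IsShilla G b c a) (hβ : a 3 = a 1 + β) : (c 3 : ℝ) = (β - 1) * a 3 := by
  have hsum : (b 0 : ℝ) = c 3 + a 3 := mod_cast
    (h.drg.valency_eq_add (i := 2) (by norm_num)).trans (by rw [h.drg.b_diam, add_zero])
  linear_combination h.valency_eq hβ - hsum

theorem c_two_mul_card (h : IsShilla G b c a) (hβ : a 3 = a 1 + β) :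
    c 2 * (Fintype.card V : ℝ) = c 2 * (1 + b 0) + b 0 * b 1 + β * (a 3 + 1) * b 2 := by
  obtain ⟨x⟩ := h.drg.connected.nonempty
  have hsphere₀ : #{y | G.dist x y = 0} = 1 := by
    simp only [h.drg.connected.dist_eq_zero_iff, filter_eq, mem_univ, if_true, card_singleton]
  have hsphere (i : ℕ) : (c (i + 1) : ℝ) * #{y | G.dist x y = i + 1} =
      b i * #{y | G.dist x y = i} := mod_cast h.drg.c_mul_card_sphere_succ x i
  have hsphere₁ : (#{y | G.dist x y = 1} : ℝ) = b 0 := by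
    have hcount := hsphere 0
    rwa [zero_add, h.drg.c_one (by norm_num), hsphere₀, Nat.cast_one, one_mul, mul_one] at hcount
  have hsphere₂ : c 2 * (#{y | G.dist x y = 2} : ℝ) = b 0 * b 1 := by
    rw [hsphere 1, hsphere₁, mul_comm]
  have hsphere₃ : c 2 * (#{y | G.dist x y = 3} : ℝ) = β * (a 3 + 1) * b 2 := by
    have hc₃ : (c 3 : ℝ) ≠ 0 := mod_cast (h.drg.c_pos (by norm_num)).ne'
    refine mul_left_cancel₀ hc₃ ?_
    calc c 3 * (c 2 * (#{y | G.dist x y = 3} : ℝ))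
        = c 2 * (c 3 * #{y | G.dist x y = 3}) := mul_left_comm ..
      _ = b 2 * (c 2 * #{y | G.dist x y = 2}) := by rw [hsphere 2, mul_left_comm]
      _ = b 2 * (b 0 * b 1) := by rw [hsphere₂]
      _ = c 3 * (β * (a 3 + 1) * b 2) := by
        rw [h.valency_eq hβ, h.b_one_eq hβ, h.c_three_eq hβ]
        ring
  have hcard : (Fintype.card V : ℝ) =
      1 + #{y | G.dist x y = 1} + #{y | G.dist x y = 2} + #{y | G.dist x y = 3} := by
    rw [h.drg.card_eq_sum_card_sphere x]
    simp only [sum_range_succ, range_zero, sum_empty, zero_add, hsphere₀]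
    push_cast
    rfl
  linear_combination c 2 * hcard + c 2 * hsphere₁ + hsphere₂ + hsphere₃

theorem sq_sub_mul_add_eq_zero (h : IsShilla G b c a) (hβ : a 3 = a 1 + β) {θ : ℝ}
    (hθ : IsEig G θ) (hlt : θ < a 3) :
    θ ^ 2 - (a 1 + a 2 - b 0) * θ + ((β - 1) * b 2 - a 2) = 0 := by
  have hroot := h.drg.eval_distancePoly_eq_zero hθ
  have ha₁ : (a 1 : ℝ) = a 3 - β := by rw [hβ, Nat.cast_add, add_sub_cancel_right]
  have hne : (θ - b 0) * (θ - a 3) ≠ 0 :=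
    mul_ne_zero (sub_ne_zero.mpr (hlt.trans h.second.2.1).ne) (sub_ne_zero.mpr hlt.ne)
  refine (mul_eq_zero_iff_left hne).mp ?_
  simp only [distancePoly, eval_sub, eval_mul, eval_X, eval_C, eval_one, h.drg.c_one (by norm_num),
    ha₁, h.valency_eq hβ, h.b_one_eq hβ, h.a_two_eq hβ, h.c_three_eq hβ] at hroot ⊢
  linear_combination hroot

theorem add_eq_of_isEig (h : IsShilla G b c a) (hβ : a 3 = a 1 + β) {θ₂ θ₃ : ℝ}
    (h₂ : IsEig G θ₂) (h₃ : IsEig G θ₃) (h₃₂ : θ₃ < θ₂) (h₂₁ : θ₂ < a 3) :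
    θ₂ + θ₃ = a 1 + a 2 - b 0 := by
  refine mul_left_cancel₀ (sub_ne_zero.mpr h₃₂.ne') ?_
  linear_combination
    h.sq_sub_mul_add_eq_zero hβ h₂ h₂₁ - h.sq_sub_mul_add_eq_zero hβ h₃ (h₃₂.trans h₂₁)

theorem sq_add_sq_eq_of_isEig (h : IsShilla G b c a) (hβ : a 3 = a 1 + β) {θ₂ θ₃ : ℝ}
    (h₂ : IsEig G θ₂) (h₃ : IsEig G θ₃) (h₃₂ : θ₃ < θ₂) (h₂₁ : θ₂ < a 3) :
    θ₂ ^ 2 + θ₃ ^ 2 = (a 1 + a 2 - b 0 : ℝ) ^ 2 - 2 * ((β - 1) * b 2 - a 2) := by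
  linear_combination h.sq_sub_mul_add_eq_zero hβ h₂ h₂₁ +
    h.sq_sub_mul_add_eq_zero hβ h₃ (h₃₂.trans h₂₁) +
    (a 1 + a 2 - b 0 : ℝ) * h.add_eq_of_isEig hβ h₂ h₃ h₃₂ h₂₁

theorem equal_mult_identity (h : IsShilla G b c a) (hβ : a 3 = a 1 + β) {θ₂ θ₃ : ℝ}
    (h₂ : IsEig G θ₂) (h₃ : IsEig G θ₃) (h₃₂ : θ₃ < θ₂) (h₂₁ : θ₂ < a 3)
    (hall : ∀ θ, IsEig G θ → θ = b 0 ∨ θ = a 3 ∨ θ = θ₂ ∨ θ = θ₃)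
    (hmult : eigMult G θ₂ = eigMult G θ₃) :
    ((b 2 + c 2) * (b 2 + c 2 - a 3) * (b 2 + c 2 + (β - 1) * a 3) - β * b 2 ^ 2
      + (2 * β - 3) * c 2 ^ 2 + β * (β - 1) * c 2 + (β - 1) ^ 2 * a 3 * c 2
      - β * (β - 1) * a 3 * b 2 + (β - 3) * b 2 * c 2 : ℝ) = 0 := by
  have ha₁ : (a 1 : ℝ) = a 3 - β := by rw [hβ, Nat.cast_add, add_sub_cancel_right]
  have hlt := h.second.2.1
  have hnodup : [(b 0 : ℝ), a 3, θ₂, θ₃].Nodup := by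
    simp [hlt.ne', (h₂₁.trans hlt).ne', (h₃₂.trans (h₂₁.trans hlt)).ne', h₂₁.ne',
      (h₃₂.trans h₂₁).ne', h₃₂.ne']
  have hrel := four_eigenvalue_relation_of_eigMult_eq h.drg.connected h.drg.isRegularOfDegree
    hnodup hall hmult
  rw [h.add_eq_of_isEig hβ h₂ h₃ h₃₂ h₂₁, h.sq_add_sq_eq_of_isEig hβ h₂ h₃ h₃₂ h₂₁,
    h.a_two_eq hβ, h.valency_eq hβ, ha₁] at hrel
  have hcard := h.c_two_mul_card hβ
  rw [h.b_one_eq hβ, h.valency_eq hβ] at hcard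
  have hpos : 0 < (a 3 : ℝ) * β * (a 3 + 1) := by
    have := h.a_three_pos hβ
    have := h.one_lt hβ
    positivity
  refine (mul_eq_zero_iff_left hpos.ne').mp ?_
  -- `c₂ * hrel` is linear in `c₂ * card V`; the multiple of `hcard` eliminates the latter.
  linear_combination (c 2 : ℝ) * hrel - (a 3 * ((a 3 - β - (b 2 + c 2)) ^ 2 -
    2 * ((β - 1) * b 2 - a 3 * β + (b 2 + c 2)) - 2 * a 3 ^ 2) -
    (2 * a 3 - (a 3 - β - (b 2 + c 2))) * (a 3 * β - a 3 ^ 2)) * hcard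

end IsShilla

/-- For a Shilla distance-regular graph with `b(Γ) = b ≥ 2` whose two smallest
eigenvalues have equal multiplicities, `a₃ - b < b₂ + c₂ < a₃ + b`. -/
theorem stmt11 {V : Type*} [Fintype V] [DecidableEq V] (G : SimpleGraph V)
    [DecidableRel G.Adj] (b c a : ℕ → ℕ) (hG : IsShilla G b c a)
    (β : ℕ) (hβ2 : 2 ≤ β) (hβ : a 3 = a 1 + β)
    (θ2 θ3 : ℝ) (h2 : IsEig G θ2) (h3 : IsEig G θ3)
    (h32 : θ3 < θ2) (h2a : θ2 < (a 3 : ℝ))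
    (hall : ∀ θ : ℝ, IsEig G θ → θ = (b 0 : ℝ) ∨ θ = (a 3 : ℝ) ∨ θ = θ2 ∨ θ = θ3)
    (hmult : eigMult G θ2 = eigMult G θ3) :
    (a 3 : ℤ) - β < (b 2 : ℤ) + c 2 ∧ (b 2 : ℤ) + c 2 < (a 3 : ℤ) + β := by
  have hb₂ : (0 : ℝ) ≤ b 2 := Nat.cast_nonneg _
  have hc₂ : (0 : ℝ) < c 2 := mod_cast hG.drg.c_pos (i := 1) (by norm_num)
  have hident := hG.equal_mult_identity hβ h2 h3 h32 h2a hall hmult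
  obtain ⟨hlower, hupper⟩ := abs_lt.mp <|
    abs_add_sub_lt_of_equal_mult_identity (Nat.cast_nonneg _) (hG.one_lt hβ) hb₂ hc₂ hident
  rify
  constructor <;> linarith
end

section
/- Let Γ be a Shilla distance-regular graph with b = b(Γ). Then q²₁₁ > 0, and q³₁₁ ≥ 0 if and only if θ₃ ≥ -b(b·b₂ + c₂)/(b₂ + c₂). In particular θ₃ ≥ -b(b·b₂+c₂)/(b₂+c₂) always holds. -/
open Finset SimpleGraph

/-- The standard sequence `u₀, u₁, u₂, u₃` associated to the eigenvalue `θ` of a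
distance-regular graph of diameter `3` with intersection numbers `b, c, a`. -/
noncomputable def stdSeq (b c a : ℕ → ℕ) (θ : ℝ) : ℕ → ℝ := fun l =>
  match l with
  | 0 => 1
  | 1 => θ / b 0
  | 2 => ((θ - a 1) * (θ / b 0) - c 1) / b 1
  | 3 => ((θ - a 2) * (((θ - a 1) * (θ / b 0) - c 1) / b 1) - c 2 * (θ / b 0)) / b 2
  | _ => 0

/-- The number `k_l` of vertices at distance `l` from a fixed vertex, for a
distance-regular graph of diameter `3`. -/
noncomputable def kdist (b c : ℕ → ℕ) : ℕ → ℝ := fun l =>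
  match l with
  | 0 => 1
  | 1 => b 0
  | 2 => b 0 * b 1 / c 2
  | 3 => b 0 * b 1 * b 2 / (c 2 * c 3)
  | _ => 0

/-- The Krein parameter `q^i_{11}` of a distance-regular graph of diameter `3` with `n`
vertices, where `m1` is the multiplicity of `θ1` and `θi` is the `i`-th eigenvalue:
`q^i_{11} = (m1 * m1 / n) * Σ_l k_l u_l(θ1)^2 u_l(θi)`. -/
noncomputable def krein11 (n m1 : ℕ) (b c a : ℕ → ℕ) (θ1 θi : ℝ) : ℝ :=
  ((m1 : ℝ) * m1 / n) *
    ∑ l ∈ Finset.range 4, kdist b c l * (stdSeq b c a θ1 l) ^ 2 * stdSeq b c a θi l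

/-- For a distance-regular graph of diameter `3` with eigenvalues
`k > θ1 > θ2 > θ3`, being `Q`-polynomial with respect to `θ1` is equivalent to
`q²₁₁ = 0` or `q³₁₁ = 0`. -/
def IsQPolyTheta1 (n m1 : ℕ) (b c a : ℕ → ℕ) (θ1 θ2 θ3 : ℝ) : Prop :=
  krein11 n m1 b c a θ1 θ2 = 0 ∨ krein11 n m1 b c a θ1 θ3 = 0

/-! If `u` is the standard sequence of an eigenvalue `θ`, the matrix `(u (dist x y))` is a positive
multiple of the orthogonal projection onto the `θ`-eigenspace. By Schur's product theorem the
entrywise product of three such matrices is positive semidefinite, and its entries sum to the number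
of vertices times `∑ l, k l * u l * v l * w l`: this is the nonnegativity of the Krein parameters.

In a Shilla graph `u 2` vanishes at `θ₁ = a₃`, and the last equation of the three-term recurrence,
divided by `θ - a₃`, makes `u 3` an affine function of the remaining eigenvalues `θ`. Hence
`q^i_{11}` is a positive multiple of `b (b b₂ + c₂) + (b₂ + c₂) θᵢ`. This is nonnegative at `θ₃` and
therefore positive at `θ₂ > θ₃`.
-/

open scoped Matrix ComplexOrder

section IntersectionNumbers

variable {V : Type*} [Fintype V] {G : SimpleGraph V} {D : ℕ} {b c a : ℕ → ℕ}

theorem IsDRG.exists_geodesic (h : IsDRG G D b c a) :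
    ∃ (x : V) (p : ℕ → V), (∀ i ≤ D, G.dist x (p i) = i) ∧ ∀ i < D, G.Adj (p i) (p (i + 1)) := by
  obtain ⟨x, y, hxy⟩ := h.exists_diam
  obtain ⟨p, hp⟩ := h.connected.exists_walk_length_eq_dist x y
  refine ⟨x, p.getVert, fun i hi => ?_, fun i hi => p.adj_getVert_succ (by omega)⟩
  have h_take := dist_le (p.take i)
  have h_drop := dist_le (p.drop i)
  have h_tri := h.connected.dist_triangle (u := x) (v := p.getVert i) (w := y)
  rw [Walk.take_length] at h_take
  rw [Walk.drop_length] at h_drop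
  omega

theorem IsDRG.b_pos_s14 (h : IsDRG G D b c a) {i : ℕ} (hi : i < D) : 0 < b i := by
  obtain ⟨x, p, hdist, hadj⟩ := h.exists_geodesic
  rw [← h.card_b i hi.le x _ (hdist i hi.le)]
  exact Nat.card_pos_iff.mpr ⟨⟨_, hadj i hi, hdist _ hi⟩, inferInstance⟩

theorem IsDRG.c_succ_pos (h : IsDRG G D b c a) {i : ℕ} (hi : i < D) : 0 < c (i + 1) := by
  obtain ⟨x, p, hdist, hadj⟩ := h.exists_geodesic
  rw [← h.card_c (i + 1) hi x _ (hdist (i + 1) hi)]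
  exact Nat.card_pos_iff.mpr ⟨⟨_, (hadj i hi).symm, hdist _ hi.le⟩, inferInstance⟩

theorem IsDRG.c_zero (h : IsDRG G D b c a) : c 0 = 0 := by
  obtain ⟨x, -, -⟩ := h.exists_diam
  rw [← h.card_c 0 (Nat.zero_le _) x x dist_self, Nat.card_eq_zero]
  refine Or.inl ⟨fun ⟨z, hxz, hz⟩ => ?_⟩
  exact hxz.ne (h.connected.dist_eq_zero_iff.mp hz)

theorem IsDRG.a_zero (h : IsDRG G D b c a) : a 0 = 0 := by
  obtain ⟨x, -, -⟩ := h.exists_diam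
  rw [← h.card_a 0 (Nat.zero_le _) x x dist_self, Nat.card_eq_zero]
  refine Or.inl ⟨fun ⟨z, hxz, hz⟩ => ?_⟩
  exact hxz.ne (h.connected.dist_eq_zero_iff.mp hz)

theorem IsDRG.b_diam_s14 (h : IsDRG G D b c a) : b D = 0 := by
  obtain ⟨x, y, hxy⟩ := h.exists_diam
  rw [← h.card_b D le_rfl x y hxy, Nat.card_eq_zero]
  refine Or.inl ⟨fun ⟨z, _, hz⟩ => ?_⟩
  exact (h.le_diam x z).not_gt (hz ▸ D.lt_succ_self)

theorem IsDRG.c_one_s14 (h : IsDRG G D b c a) (hD : 0 < D) : c 1 = 1 := by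
  obtain ⟨x, p, hdist, -⟩ := h.exists_geodesic
  have hxy := hdist 1 hD
  rw [← h.card_c 1 hD x (p 1) hxy, Nat.card_eq_one_iff_exists]
  refine ⟨⟨x, (dist_eq_one_iff_adj.mp hxy).symm, dist_self⟩, fun ⟨z, _, hz⟩ => ?_⟩
  exact Subtype.ext (h.connected.dist_eq_zero_iff.mp hz).symm

theorem natCard_setOf_adj_eq_sum [DecidableRel G.Adj] (y : V) (p : V → Prop) [DecidablePred p] :
    (Nat.card {z : V | G.Adj y z ∧ p z} : ℝ) =
      ∑ z ∈ G.neighborFinset y, if p z then (1 : ℝ) else 0 := by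
  rw [Finset.sum_boole]
  congr 1
  exact Nat.subtype_card _ fun z => by simp

theorem IsDRG.sum_neighborFinset [DecidableRel G.Adj] (h : IsDRG G D b c a) (f : ℕ → ℝ)
    {x y : V} {l : ℕ} (hl : G.dist x y = l) :
    ∑ z ∈ G.neighborFinset y, f (G.dist x z) =
      c l * f (l - 1) + a l * f l + b l * f (l + 1) := by
  have hD : l ≤ D := hl ▸ h.le_diam x y
  rw [← h.card_c l hD x y hl, ← h.card_a l hD x y hl, ← h.card_b l hD x y hl]
  simp only [natCard_setOf_adj_eq_sum, Finset.sum_mul, ← Finset.sum_add_distrib]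
  refine Finset.sum_congr rfl fun z hz => ?_
  have hyz : G.Adj y z := by simpa using hz
  rcases Nat.eq_zero_or_pos l with rfl | hpos
  · obtain rfl : x = y := h.connected.dist_eq_zero_iff.mp hl
    simp [dist_eq_one_iff_adj.mpr hyz]
  · have hdist := hyz.diff_dist_adj (u := x)
    rw [hl] at hdist
    rcases hdist with hdist | hdist | hdist <;> rw [hdist]
    · simp [show l ≠ l - 1 by omega]
    · simp [show l + 1 ≠ l - 1 by omega]
    · simp [show l - 1 ≠ l by omega, show l - 1 ≠ l + 1 by omega]

theorem IsDRG.c_add_a_add_b (h : IsDRG G D b c a) {i : ℕ} (hi : i ≤ D) :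
    (c i + a i + b i : ℝ) = b 0 := by
  classical
  obtain ⟨x, p, hdist, -⟩ := h.exists_geodesic
  have h_deg := h.sum_neighborFinset (fun _ => 1) (hdist i hi)
  have h_deg_zero := h.sum_neighborFinset (fun _ => 1) (dist_self (G := G) (v := p i))
  simp only [h.c_zero, h.a_zero, mul_one, Nat.cast_zero, zero_add] at h_deg h_deg_zero
  rw [← h_deg, h_deg_zero]

end IntersectionNumbers

section StandardSequence

variable {b c a : ℕ → ℕ} {D : ℕ} {θ : ℝ} {u : ℕ → ℝ}

/-- The number `k_l` of vertices at distance `l` from a fixed vertex of a distance-regular graph of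
arbitrary diameter, computed from the intersection numbers. -/
noncomputable def sphereCard (b c : ℕ → ℕ) : ℕ → ℝ
  | 0 => 1
  | l + 1 => sphereCard b c l * b l / c (l + 1)

/-- `u` is a standard sequence for `θ`: it satisfies the three-term recurrence below the diameter
`D`. The equation at `D` itself is left out, since it holds only for the eigenvalues `θ`. For
`l = 0` the term `u (l - 1)` is harmless because `c 0 = 0`. -/
structure IsStandardSeq (D : ℕ) (b c a : ℕ → ℕ) (θ : ℝ) (u : ℕ → ℝ) : Prop where
  zero : u 0 = 1
  recurrence : ∀ l < D, θ * u l = c l * u (l - 1) + a l * u l + b l * u (l + 1)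

theorem sphereCard_nonneg (b c : ℕ → ℕ) : ∀ l, 0 ≤ sphereCard b c l
  | 0 => zero_le_one
  | l + 1 => by
    have := sphereCard_nonneg b c l
    rw [sphereCard]
    positivity

variable {V : Type*} [Fintype V] {G : SimpleGraph V}

theorem IsDRG.sphereCard_pos (h : IsDRG G D b c a) : ∀ {l : ℕ}, l ≤ D → 0 < sphereCard b c l
  | 0, _ => zero_lt_one
  | l + 1, hl => by
    have hk := h.sphereCard_pos (Nat.le_of_succ_le hl)
    have hb : 0 < b l := h.b_pos_s14 hl
    have hc : 0 < c (l + 1) := h.c_succ_pos hl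
    rw [sphereCard]
    positivity

theorem IsDRG.sphereCard_succ_mul_c (h : IsDRG G D b c a) {l : ℕ} (hl : l < D) :
    sphereCard b c (l + 1) * c (l + 1) = sphereCard b c l * b l :=
  div_mul_cancel₀ _ (mod_cast (h.c_succ_pos hl).ne')

theorem IsDRG.isStandardSeq_one (h : IsDRG G D b c a) :
    IsStandardSeq D b c a (b 0) fun _ => 1 where
  zero := rfl
  recurrence l hl := by simp only [mul_one, h.c_add_a_add_b hl.le]

end StandardSequence

section RadialMatrix

variable {V : Type*} {G : SimpleGraph V}

/-- The matrix whose entries are a given function of the distance, i.e. the element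
`∑ l, f l • A_l` of the Bose–Mesner algebra. -/
noncomputable def radialMatrix (G : SimpleGraph V) (f : ℕ → ℝ) : Matrix V V ℝ :=
  Matrix.of fun x y => f (G.dist x y)

/-- The distance matrix `A_l`. -/
noncomputable def distMatrix (G : SimpleGraph V) (l : ℕ) : Matrix V V ℝ :=
  radialMatrix G (Pi.single l 1)

theorem isHermitian_radialMatrix (f : ℕ → ℝ) : (radialMatrix G f).IsHermitian := by
  ext x y
  simp [radialMatrix, dist_comm]

theorem distMatrix_zero [DecidableEq V] (hG : G.Connected) : distMatrix G 0 = 1 := by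
  ext x y
  simp [distMatrix, radialMatrix, Pi.single_apply, Matrix.one_apply, hG.dist_eq_zero_iff]

theorem distMatrix_one [DecidableRel G.Adj] : distMatrix G 1 = G.adjMatrix ℝ := by
  ext x y
  simp [distMatrix, radialMatrix, Pi.single_apply, adjMatrix_apply]

variable [Fintype V] {D : ℕ} {b c a : ℕ → ℕ}

theorem IsDRG.distMatrix_eq_zero (h : IsDRG G D b c a) {l : ℕ} (hl : D < l) :
    distMatrix G l = 0 := by
  ext x y
  simp [distMatrix, radialMatrix, ((h.le_diam x y).trans_lt hl).ne]

theorem IsDRG.radialMatrix_eq_sum (h : IsDRG G D b c a) (f : ℕ → ℝ) :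
    radialMatrix G f = ∑ l ∈ range (D + 1), f l • distMatrix G l := by
  ext x y
  have hxy : G.dist x y < D + 1 := Nat.lt_succ_of_le (h.le_diam x y)
  simp [Matrix.sum_apply, distMatrix, radialMatrix, Pi.single_apply, hxy]

variable [DecidableRel G.Adj]

theorem IsDRG.radialMatrix_mul_adjMatrix (h : IsDRG G D b c a) (f : ℕ → ℝ) :
    radialMatrix G f * G.adjMatrix ℝ =
      radialMatrix G fun l => c l * f (l - 1) + a l * f l + b l * f (l + 1) := by
  ext x y
  rw [mul_adjMatrix_apply]
  exact h.sum_neighborFinset f rfl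

theorem IsDRG.distMatrix_succ_mul_adjMatrix (h : IsDRG G D b c a) (l : ℕ) :
    distMatrix G (l + 1) * G.adjMatrix ℝ =
      (b l : ℝ) • distMatrix G l + (a (l + 1) : ℝ) • distMatrix G (l + 1) +
        (c (l + 2) : ℝ) • distMatrix G (l + 2) := by
  rw [distMatrix, h.radialMatrix_mul_adjMatrix]
  ext x y
  have h_pred : G.dist x y - 1 = l + 1 ↔ G.dist x y = l + 2 := by omega
  simp only [radialMatrix, distMatrix, Matrix.add_apply, Matrix.smul_apply, Matrix.of_apply,
    Pi.single_apply, h_pred, Nat.add_right_cancel_iff, smul_eq_mul]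
  split_ifs <;> first | omega | simp_all

end RadialMatrix

section Eigenvectors

variable {V : Type*} [Fintype V] {G : SimpleGraph V} [DecidableRel G.Adj]
  {D : ℕ} {b c a : ℕ → ℕ} {θ : ℝ} {u : ℕ → ℝ} {φ : V → ℝ}

theorem IsDRG.distMatrix_recurrence (h : IsDRG G D b c a)
    (hφ : G.adjMatrix ℝ *ᵥ φ = θ • φ) (l : ℕ) :
    θ • (distMatrix G (l + 1) *ᵥ φ) =
      (b l : ℝ) • (distMatrix G l *ᵥ φ) + (a (l + 1) : ℝ) • (distMatrix G (l + 1) *ᵥ φ) +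
        (c (l + 2) : ℝ) • (distMatrix G (l + 2) *ᵥ φ) := by
  rw [← Matrix.mulVec_smul, ← hφ, Matrix.mulVec_mulVec, h.distMatrix_succ_mul_adjMatrix]
  simp only [Matrix.add_mulVec, Matrix.smul_mulVec]

theorem IsDRG.distMatrix_mulVec (h : IsDRG G D b c a) (hu : IsStandardSeq D b c a θ u)
    (hφ : G.adjMatrix ℝ *ᵥ φ = θ • φ) :
    ∀ {l : ℕ}, l ≤ D → distMatrix G l *ᵥ φ = (sphereCard b c l * u l) • φ
  | 0, _ => by classical simp [distMatrix_zero h.connected, sphereCard, hu.zero]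
  | 1, hl => by
    have h_rec := hu.recurrence 0 hl
    simp only [h.c_zero, h.a_zero, hu.zero] at h_rec
    rw [distMatrix_one, hφ, sphereCard, sphereCard, zero_add, h.c_one_s14 hl]
    congr 1
    linear_combination h_rec
  | l + 2, hl => by
    have hc : (c (l + 2) : ℝ) ≠ 0 := mod_cast (h.c_succ_pos hl).ne'
    have h_mat := h.distMatrix_recurrence hφ l
    rw [h.distMatrix_mulVec hu hφ (by omega : l ≤ D),
      h.distMatrix_mulVec hu hφ (by omega : l + 1 ≤ D)] at h_mat
    have h_rec : θ * u (l + 1) = c (l + 1) * u l + a (l + 1) * u (l + 1) + b (l + 1) * u (l + 2) :=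
      hu.recurrence (l + 1) hl
    have h_card := h.sphereCard_succ_mul_c (Nat.lt_of_succ_lt hl)
    have h_card_succ := h.sphereCard_succ_mul_c hl
    refine smul_right_injective _ hc (funext fun x => ?_)
    have h_mat_x := congrFun h_mat x
    simp only [Pi.add_apply, Pi.smul_apply, smul_eq_mul] at h_mat_x ⊢
    linear_combination -h_mat_x + sphereCard b c (l + 1) * φ x * h_rec
      + u l * φ x * h_card - u (l + 2) * φ x * h_card_succ

theorem IsDRG.radialMatrix_mulVec (h : IsDRG G D b c a) (hu : IsStandardSeq D b c a θ u)
    (hφ : G.adjMatrix ℝ *ᵥ φ = θ • φ) (f : ℕ → ℝ) :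
    radialMatrix G f *ᵥ φ = (∑ l ∈ range (D + 1), sphereCard b c l * (u l * f l)) • φ := by
  rw [h.radialMatrix_eq_sum, Matrix.sum_mulVec, Finset.sum_smul]
  refine Finset.sum_congr rfl fun l hl => ?_
  rw [Matrix.smul_mulVec, h.distMatrix_mulVec hu hφ (mem_range_succ_iff.mp hl), smul_smul]
  congr 1
  ring

variable [DecidableEq V]

theorem IsDRG.recurrence_diam (h : IsDRG G (D + 1) b c a)
    (hu : IsStandardSeq (D + 1) b c a θ u) (hθ : IsEig G θ) :
    θ * u (D + 1) = c (D + 1) * u D + a (D + 1) * u (D + 1) := by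
  obtain ⟨φ, hφ_ne, hφ⟩ := hθ
  obtain ⟨x, hx⟩ := Function.ne_iff.mp hφ_ne
  have h_mat := congrFun (h.distMatrix_recurrence hφ D) x
  rw [h.distMatrix_eq_zero (Nat.lt_succ_self (D + 1)), h.distMatrix_mulVec hu hφ le_rfl,
    h.distMatrix_mulVec hu hφ D.le_succ] at h_mat
  simp only [Pi.add_apply, Pi.smul_apply, Matrix.zero_mulVec, smul_zero, Pi.zero_apply, add_zero,
    smul_eq_mul] at h_mat
  refine mul_left_cancel₀ (h.sphereCard_pos le_rfl).ne' (mul_right_cancel₀ hx ?_)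
  linear_combination h_mat - u D * φ x * h.sphereCard_succ_mul_c D.lt_succ_self

theorem IsDRG.adjMatrix_mulVec_standardSeq (h : IsDRG G (D + 1) b c a)
    (hu : IsStandardSeq (D + 1) b c a θ u) (hθ : IsEig G θ) (y : V) :
    G.adjMatrix ℝ *ᵥ (fun x => u (G.dist y x)) = θ • fun x => u (G.dist y x) := by
  funext x
  rw [adjMatrix_mulVec_apply, h.sum_neighborFinset u rfl, Pi.smul_apply, smul_eq_mul]
  rcases (h.le_diam y x).lt_or_eq with hlt | heq
  · exact (hu.recurrence _ hlt).symm
  · simp [heq, h.b_diam_s14, h.recurrence_diam hu hθ]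

end Eigenvectors

section Krein

theorem posSemidef_of_mul_self_eq_smul {ι 𝕜 : Type*} [Fintype ι] [RCLike 𝕜]
    {M : Matrix ι ι 𝕜} {s : ℝ} (hM : M.IsHermitian) (hs : 0 < s) (hMM : M * M = s • M) :
    M.PosSemidef := by
  have h_eq : M = s⁻¹ • (Mᴴ * M) := by rw [hM.eq, hMM, inv_smul_smul₀ hs.ne']
  rw [h_eq]
  exact (Matrix.posSemidef_conjTranspose_mul_self M).smul (inv_nonneg.mpr hs.le)

variable {V : Type*} [Fintype V] {G : SimpleGraph V} {D : ℕ} {b c a : ℕ → ℕ}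

theorem IsDRG.radialMatrix_mulVec_one (h : IsDRG G D b c a) (f : ℕ → ℝ) :
    radialMatrix G f *ᵥ 1 = (∑ l ∈ range (D + 1), sphereCard b c l * f l) • 1 := by
  classical
  have h_one : G.adjMatrix ℝ *ᵥ 1 = (b 0 : ℝ) • 1 := by
    funext y
    rw [adjMatrix_mulVec_apply]
    simpa [h.c_zero, h.a_zero] using h.sum_neighborFinset (fun _ => 1) (dist_self (v := y))
  simpa only [one_mul] using h.radialMatrix_mulVec h.isStandardSeq_one h_one f

theorem IsDRG.sum_sphereCard_mul_nonneg (h : IsDRG G D b c a) {f : ℕ → ℝ}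
    (hf : (radialMatrix G f).PosSemidef) : 0 ≤ ∑ l ∈ range (D + 1), sphereCard b c l * f l := by
  obtain ⟨x, -, -⟩ := h.exists_diam
  have h_card : (0 : ℝ) < Fintype.card V := mod_cast Fintype.card_pos_iff.mpr ⟨x⟩
  have h_form := hf.dotProduct_mulVec_nonneg 1
  rw [h.radialMatrix_mulVec_one, star_one, dotProduct_smul, one_dotProduct_one,
    smul_eq_mul] at h_form
  exact nonneg_of_mul_nonneg_left h_form h_card

variable [DecidableEq V] [DecidableRel G.Adj] {θ η ζ : ℝ} {u v w : ℕ → ℝ}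

theorem IsDRG.radialMatrix_mul_self (h : IsDRG G (D + 1) b c a)
    (hu : IsStandardSeq (D + 1) b c a θ u) (hθ : IsEig G θ) :
    radialMatrix G u * radialMatrix G u =
      (∑ l ∈ range (D + 2), sphereCard b c l * (u l * u l)) • radialMatrix G u := by
  ext x y
  have h_col := congrFun
    (h.radialMatrix_mulVec hu (h.adjMatrix_mulVec_standardSeq hu hθ y) u) x
  simpa [radialMatrix, Matrix.mul_apply, Matrix.mulVec, dotProduct, dist_comm (u := y)] using h_col

theorem IsDRG.posSemidef_radialMatrix (h : IsDRG G (D + 1) b c a)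
    (hu : IsStandardSeq (D + 1) b c a θ u) (hθ : IsEig G θ) :
    (radialMatrix G u).PosSemidef := by
  refine posSemidef_of_mul_self_eq_smul (isHermitian_radialMatrix u) ?_
    (h.radialMatrix_mul_self hu hθ)
  exact Finset.sum_pos' (fun l _ => mul_nonneg (sphereCard_nonneg b c l) (mul_self_nonneg _))
    ⟨0, by simp, by simp [sphereCard, hu.zero]⟩

theorem IsDRG.sum_sphereCard_mul_standardSeq_nonneg (h : IsDRG G (D + 1) b c a)
    (hu : IsStandardSeq (D + 1) b c a θ u) (hθ : IsEig G θ)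
    (hv : IsStandardSeq (D + 1) b c a η v) (hη : IsEig G η)
    (hw : IsStandardSeq (D + 1) b c a ζ w) (hζ : IsEig G ζ) :
    0 ≤ ∑ l ∈ range (D + 2), sphereCard b c l * (u l * v l * w l) :=
  h.sum_sphereCard_mul_nonneg <|
    ((h.posSemidef_radialMatrix hu hθ).hadamard (h.posSemidef_radialMatrix hv hη)).hadamard
      (h.posSemidef_radialMatrix hw hζ)

end Krein

section DiameterThree

variable {V : Type*} [Fintype V] {G : SimpleGraph V} {b c a : ℕ → ℕ} {θ η : ℝ}

theorem kdist_eq_sphereCard (hc : c 1 = 1) {l : ℕ} (hl : l < 4) :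
    kdist b c l = sphereCard b c l := by
  interval_cases l <;> simp only [kdist, sphereCard, zero_add, hc, one_add_one_eq_two] <;> ring

theorem IsDRG.isStandardSeq_stdSeq (h : IsDRG G 3 b c a) (θ : ℝ) :
    IsStandardSeq 3 b c a θ (stdSeq b c a θ) where
  zero := rfl
  recurrence l hl := by
    have hb : (b l : ℝ) ≠ 0 := mod_cast (h.b_pos_s14 hl).ne'
    interval_cases l
    · simp [stdSeq, h.c_zero, h.a_zero, mul_div_cancel₀ θ hb]
    · simp only [stdSeq, mul_div_cancel₀ _ hb]
      ring
    · simp only [stdSeq, mul_div_cancel₀ _ hb]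
      ring

variable [DecidableEq V] [DecidableRel G.Adj]

theorem IsDRG.krein11_nonneg (h : IsDRG G 3 b c a) (n m : ℕ) (hθ : IsEig G θ) (hη : IsEig G η) :
    0 ≤ krein11 n m b c a θ η := by
  have h_krein := h.sum_sphereCard_mul_standardSeq_nonneg (h.isStandardSeq_stdSeq θ) hθ
    (h.isStandardSeq_stdSeq θ) hθ (h.isStandardSeq_stdSeq η) hη
  refine mul_nonneg (by positivity) (h_krein.trans_eq (Finset.sum_congr rfl fun l hl => ?_))
  rw [kdist_eq_sphereCard (h.c_one_s14 three_pos) (mem_range.mp hl)]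
  ring

theorem IsEig.eigMult_pos (hθ : IsEig G θ) : 0 < eigMult G θ := by
  obtain ⟨φ, hφ_ne, hφ⟩ := hθ
  have h_mem : φ ∈ Module.End.eigenspace (Matrix.toLin' (G.adjMatrix ℝ)) θ := by
    rw [Module.End.mem_eigenspace_iff, Matrix.toLin'_apply, hφ]
  exact Module.finrank_pos_iff_exists_ne_zero.mpr ⟨⟨φ, h_mem⟩, by simpa using hφ_ne⟩

end DiameterThree

section Shilla

variable {V : Type*} [Fintype V] [DecidableEq V] {G : SimpleGraph V} [DecidableRel G.Adj]
  {b c a : ℕ → ℕ} {β n m : ℕ} {θ : ℝ}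

theorem IsShilla.stdSeq_a_three_two (hG : IsShilla G b c a) : stdSeq b c a (a 3) 2 = 0 := by
  have hc3 : (c 3 : ℝ) ≠ 0 := mod_cast (hG.drg.c_succ_pos (i := 2) (by norm_num)).ne'
  have h_last := hG.drg.recurrence_diam (hG.drg.isStandardSeq_stdSeq (a 3)) hG.second.1
  exact (mul_eq_zero_iff_left hc3).mp (by linear_combination -h_last)

theorem IsShilla.b_zero_eq (hG : IsShilla G b c a) (hβ : a 3 = a 1 + β) :
    (b 0 : ℝ) = β * a 3 := by
  have hb0 : (b 0 : ℝ) ≠ 0 := mod_cast (hG.drg.b_pos_s14 three_pos).ne'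
  have hb1 : (b 1 : ℝ) ≠ 0 := mod_cast (hG.drg.b_pos_s14 (i := 1) (by norm_num)).ne'
  have hβ' : (a 3 : ℝ) = a 1 + β := mod_cast hβ
  have h_two := hG.stdSeq_a_three_two
  simp only [stdSeq, hG.drg.c_one_s14 three_pos] at h_two
  field_simp at h_two
  push_cast at h_two
  linear_combination -h_two + (a 3 : ℝ) * hβ'

theorem IsShilla.beta_ne_zero (hG : IsShilla G b c a) (hβ : a 3 = a 1 + β) : (β : ℝ) ≠ 0 := by
  have hb0 : (b 0 : ℝ) ≠ 0 := mod_cast (hG.drg.b_pos_s14 three_pos).ne'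
  exact left_ne_zero_of_mul (hG.b_zero_eq hβ ▸ hb0)

theorem IsShilla.stdSeq_a_three_one (hG : IsShilla G b c a) (hβ : a 3 = a 1 + β) :
    stdSeq b c a (a 3) 1 = 1 / β := by
  have hb0 : (b 0 : ℝ) ≠ 0 := mod_cast (hG.drg.b_pos_s14 three_pos).ne'
  rw [stdSeq, div_eq_div_iff hb0 (hG.beta_ne_zero hβ), hG.b_zero_eq hβ]
  ring

theorem IsShilla.stdSeq_a_three_three (hG : IsShilla G b c a) (hβ : a 3 = a 1 + β) :
    stdSeq b c a (a 3) 3 = -c 2 / (β * b 2) := by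
  have hb2 : (b 2 : ℝ) ≠ 0 := mod_cast (hG.drg.b_pos_s14 (i := 2) (by norm_num)).ne'
  have hβ0 := hG.beta_ne_zero hβ
  have h_rec := (hG.drg.isStandardSeq_stdSeq (a 3)).recurrence 2 (by norm_num)
  norm_num [hG.stdSeq_a_three_two, hG.stdSeq_a_three_one hβ] at h_rec
  field_simp at h_rec ⊢
  linear_combination -h_rec

theorem IsShilla.stdSeq_two (hG : IsShilla G b c a) (hβ : a 3 = a 1 + β) (θ : ℝ) :
    stdSeq b c a θ 2 = (θ - a 3) * (θ + β) / (b 0 * b 1) := by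
  have hb0 : (b 0 : ℝ) ≠ 0 := mod_cast (hG.drg.b_pos_s14 three_pos).ne'
  have hb1 : (b 1 : ℝ) ≠ 0 := mod_cast (hG.drg.b_pos_s14 (i := 1) (by norm_num)).ne'
  have hβ' : (a 1 : ℝ) = a 3 - β := by rw [hβ]; push_cast; ring
  simp only [stdSeq, hG.drg.c_one_s14 three_pos, hβ']
  field_simp
  push_cast
  linear_combination -hG.b_zero_eq hβ

theorem IsShilla.stdSeq_three (hG : IsShilla G b c a) (hβ : a 3 = a 1 + β)
    (hθ : IsEig G θ) (hθa : θ ≠ a 3) :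
    stdSeq b c a θ 3 = c 3 * (θ + β) / (b 0 * b 1) := by
  have h_last := hG.drg.recurrence_diam (hG.drg.isStandardSeq_stdSeq θ) hθ
  rw [hG.stdSeq_two hβ] at h_last
  refine mul_left_cancel₀ (sub_ne_zero.mpr hθa) ?_
  linear_combination h_last

theorem IsShilla.krein11_eq (hG : IsShilla G b c a) (hβ : a 3 = a 1 + β)
    (hθ : IsEig G θ) (hθa : θ ≠ a 3) (n m : ℕ) :
    krein11 n m b c a (a 3) θ =
      m * m / n * ((β * (β * b 2 + c 2) + (b 2 + c 2) * θ) / (β ^ 2 * b 2)) := by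
  have hb0 : (b 0 : ℝ) ≠ 0 := mod_cast (hG.drg.b_pos_s14 three_pos).ne'
  have hb1 : (b 1 : ℝ) ≠ 0 := mod_cast (hG.drg.b_pos_s14 (i := 1) (by norm_num)).ne'
  have hb2 : (b 2 : ℝ) ≠ 0 := mod_cast (hG.drg.b_pos_s14 (i := 2) (by norm_num)).ne'
  have hc2 : (c 2 : ℝ) ≠ 0 := mod_cast (hG.drg.c_succ_pos (i := 1) (by norm_num)).ne'
  have hc3 : (c 3 : ℝ) ≠ 0 := mod_cast (hG.drg.c_succ_pos (i := 2) (by norm_num)).ne'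
  have hβ0 := hG.beta_ne_zero hβ
  rw [krein11]
  congr 1
  simp only [Finset.sum_range_succ, Finset.sum_range_zero, hG.stdSeq_a_three_one hβ,
    hG.stdSeq_a_three_two, hG.stdSeq_a_three_three hβ, hG.stdSeq_three hβ hθ hθa]
  simp only [kdist, stdSeq]
  field_simp
  ring

theorem IsShilla.krein11_pos_iff (hG : IsShilla G b c a) (hβ : a 3 = a 1 + β)
    (hθ : IsEig G θ) (hθa : θ ≠ a 3) (hn : 0 < n) (hm : 0 < m) :
    0 < krein11 n m b c a (a 3) θ ↔ -(β * (β * b 2 + c 2)) / (b 2 + c 2) < θ := by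
  have hb2 : (0 : ℝ) < b 2 := mod_cast hG.drg.b_pos_s14 (i := 2) (by norm_num)
  have hβ0 := hG.beta_ne_zero hβ
  rw [hG.krein11_eq hβ hθ hθa, mul_pos_iff_of_pos_left (by positivity),
    div_pos_iff_of_pos_right (by positivity), div_lt_iff₀ (by positivity), neg_lt_iff_pos_add',
    mul_comm θ]

theorem IsShilla.krein11_nonneg_iff (hG : IsShilla G b c a) (hβ : a 3 = a 1 + β)
    (hθ : IsEig G θ) (hθa : θ ≠ a 3) (hn : 0 < n) (hm : 0 < m) :
    0 ≤ krein11 n m b c a (a 3) θ ↔ -(β * (β * b 2 + c 2)) / (b 2 + c 2) ≤ θ := by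
  have hb2 : (0 : ℝ) < b 2 := mod_cast hG.drg.b_pos_s14 (i := 2) (by norm_num)
  have hβ0 := hG.beta_ne_zero hβ
  rw [hG.krein11_eq hβ hθ hθa, mul_nonneg_iff_of_pos_left (by positivity),
    le_div_iff₀ (by positivity), zero_mul, div_le_iff₀ (by positivity), neg_le_iff_add_nonneg',
    mul_comm θ]

end Shilla

/-- For a Shilla distance-regular graph with `b = b(Γ)`: `q²₁₁ > 0`, and
`q³₁₁ ≥ 0 ↔ θ₃ ≥ -b(b·b₂+c₂)/(b₂+c₂)`; in particular the latter bound always holds. -/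
theorem stmt14 {V : Type*} [Fintype V] [DecidableEq V] (G : SimpleGraph V)
    [DecidableRel G.Adj] (b c a : ℕ → ℕ) (hG : IsShilla G b c a)
    (β : ℕ) (hβ : a 3 = a 1 + β)
    (θ2 θ3 : ℝ) (h2 : IsEig G θ2) (h3 : IsEig G θ3)
    (h32 : θ3 < θ2) (h2a : θ2 < (a 3 : ℝ))
    (hall : ∀ θ : ℝ, IsEig G θ → θ = (b 0 : ℝ) ∨ θ = (a 3 : ℝ) ∨ θ = θ2 ∨ θ = θ3)
    (n : ℕ) (hn : Fintype.card V = n) (m1 : ℕ) (hm1 : eigMult G ((a 3 : ℝ)) = m1) :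
    0 < krein11 n m1 b c a ((a 3 : ℝ)) θ2 ∧
    (0 ≤ krein11 n m1 b c a ((a 3 : ℝ)) θ3 ↔
      θ3 ≥ -((β : ℝ) * ((β : ℝ) * b 2 + c 2)) / ((b 2 : ℝ) + c 2)) ∧
    θ3 ≥ -((β : ℝ) * ((β : ℝ) * b 2 + c 2)) / ((b 2 : ℝ) + c 2) := by
  have hn0 : 0 < n := hn ▸ Fintype.card_pos_iff.mpr hG.drg.connected.nonempty
  have hm0 : 0 < m1 := hm1 ▸ hG.second.1.eigMult_pos
  have h_iff := hG.krein11_nonneg_iff hβ h3 (h32.trans h2a).ne hn0 hm0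
  have h_bound := h_iff.mp (hG.drg.krein11_nonneg n m1 hG.second.1 h3)
  exact ⟨(hG.krein11_pos_iff hβ h2 h2a.ne hn0 hm0).mpr (h_bound.trans_lt h32), h_iff, h_bound⟩
end
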